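/- Let A be a Hopf algebra over a field K with bijective antipode S, and let α, β, γ, δ be Hopf algebra automorphisms of A. Let W be a (γ, δ)-Yetter–Drinfel'd module over A with action a·w and coaction w ↦ w₍₀₎ ⊗ w₍₁₎. Define on the same underlying vector space W a new left A-action a ⇀ w = (γ⁻¹βγα⁻¹)(a)·w and a new right A-coaction w ↦ w₍₀₎ ⊗ (αβ⁻¹)(w₍₁₎). Then with these structures W is an (αγα⁻¹, αβ⁻¹δγ⁻¹βγα⁻¹)-Yetter–Drinfel'd module over A. -/

import Mathlib

/-!
Write `θ = γ⁻¹βγα⁻¹` and `η = αβ⁻¹`; both are Hopf automorphisms. Restricting the action along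
the algebra map `θ` gives a module, and pushing the coaction forward along the coalgebra map
`η` gives a comodule (`isCoassoc_twistCoact`, `isCounital_twistCoact`). For the compatibility,
apply `id ⊗ η` to the `(γ, δ)`-condition at `θ(a) · w`. Since `η` is multiplicative and `θ`
comultiplicative, this reads
`θ(a₍₂₎)·w₍₀₎ ⊗ ηδθ(a₍₃₎) η(w₍₁₎) ηγS⁻¹θ(a₍₁₎)` (`ydRHS_twist`), where `ηδθ` is the required
second automorphism, and `ηγS⁻¹θ = ηγθS⁻¹ = αγα⁻¹S⁻¹` because `θ` commutes with `S⁻¹`.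

The last fact is not part of the definition of `IsHopfAuto`, which asks only for
compatibility with `Δ`. It follows from uniqueness of counits (`IsHopfAuto.counit_comp`) and
of convolution inverses (`IsHopfAuto.antipode_comp`).
-/

/-!
STATEMENT 18: For a Hopf algebra `A` over a field `K` with bijective antipode, Hopf
algebra automorphisms `α, β, γ, δ` of `A` and a `(γ,δ)`-Yetter-Drinfel'd module `W`,
the same space with new action `a ⇀ w = (γ⁻¹βγα⁻¹)(a)·w` and new coaction
`w ↦ w₍₀₎ ⊗ (αβ⁻¹)(w₍₁₎)` is an `(αγα⁻¹, αβ⁻¹δγ⁻¹βγα⁻¹)`-Yetter-Drinfel'd module.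
-/

open TensorProduct LinearMap

section

variable (K A : Type*) [Field K] [Ring A] [HopfAlgebra K A]

/-- The antipode as a linear map. -/
noncomputable def antipodeL : A →ₗ[K] A := HopfAlgebra.antipode (R := K)

/-- The action of `A` on a left `A`-module, as a `K`-linear map `A ⊗ V → V`. -/
noncomputable def actMap (V : Type*) [AddCommGroup V] [Module K V] [Module A V]
    [IsScalarTower K A V] : A ⊗[K] V →ₗ[K] V :=
  TensorProduct.lift (LinearMap.mk₂ K (fun a v => a • v)
    (fun a b v => add_smul a b v)
    (fun k a v => smul_assoc k a v)
    (fun a u v => smul_add a u v)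
    (fun a k v => (smul_comm a k v).symm))

variable {K A}

/-- Coassociativity of a right coaction `ρ : V → V ⊗ A`:
`(ρ ⊗ id) ∘ ρ = (id ⊗ Δ) ∘ ρ`. -/
def IsCoassoc {V : Type*} [AddCommGroup V] [Module K V]
    (ρ : V →ₗ[K] V ⊗[K] A) : Prop :=
  rTensor A ρ ∘ₗ ρ =
    (TensorProduct.assoc K V A A).symm.toLinearMap
      ∘ₗ lTensor V (Coalgebra.comul (R := K)) ∘ₗ ρ

/-- Counitality of a right coaction `ρ : V → V ⊗ A`: `(id ⊗ ε) ∘ ρ = id`. -/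
def IsCounital {V : Type*} [AddCommGroup V] [Module K V]
    (ρ : V →ₗ[K] V ⊗[K] A) : Prop :=
  lTensor V (Coalgebra.counit (R := K)) ∘ₗ ρ = (TensorProduct.rid K V).symm.toLinearMap

variable (K A)

/-- For a left action `act : A ⊗ V → V`, a right coaction `ρ : V → V ⊗ A` and twisting
maps `φ ψ : A → A`, the map `a ⊗ v ↦ a₍₂₎·v₍₀₎ ⊗ ψ(a₍₃₎) v₍₁₎ φ(a₍₁₎)`.
With `φ = S⁻¹`, `ψ = id` this is the right-hand side of the Yetter-Drinfel'd
compatibility condition. -/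
noncomputable def ydRHS (V : Type*) [AddCommGroup V] [Module K V]
    (act : A ⊗[K] V →ₗ[K] V) (ρ : V →ₗ[K] V ⊗[K] A) (φ ψ : A →ₗ[K] A) :
    A ⊗[K] V →ₗ[K] V ⊗[K] A :=
  lTensor V (mul' K A ∘ₗ lTensor A (mul' K A) ∘ₗ rTensor (A ⊗[K] A) ψ)
  ∘ₗ rTensor (A ⊗[K] (A ⊗[K] A)) act
  ∘ₗ (tensorTensorTensorComm K A A V (A ⊗[K] A)).toLinearMap
  ∘ₗ lTensor (A ⊗[K] A) (TensorProduct.assoc K V A A).toLinearMap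
  ∘ₗ lTensor (A ⊗[K] A) (rTensor A ρ)
  ∘ₗ lTensor (A ⊗[K] A) (TensorProduct.comm K A V).toLinearMap
  ∘ₗ lTensor (A ⊗[K] A) (rTensor V φ)
  ∘ₗ (TensorProduct.assoc K (A ⊗[K] A) A V).toLinearMap
  ∘ₗ rTensor V (rTensor A (Coalgebra.comul (R := K)))
  ∘ₗ rTensor V (TensorProduct.comm K A A).toLinearMap
  ∘ₗ rTensor V (Coalgebra.comul (R := K))

/-- The Yetter-Drinfel'd compatibility condition
`ρ(a·v) = a₍₂₎·v₍₀₎ ⊗ a₍₃₎ v₍₁₎ S⁻¹(a₍₁₎)`, where `Si` denotes `S⁻¹`. -/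
def IsYD (V : Type*) [AddCommGroup V] [Module K V]
    (act : A ⊗[K] V →ₗ[K] V) (ρ : V →ₗ[K] V ⊗[K] A) (Si : A →ₗ[K] A) : Prop :=
  ρ ∘ₗ act = ydRHS K A V act ρ Si LinearMap.id

/-- The braiding-type map `z ⊗ u ↦ u₍₀₎ ⊗ u₍₁₎·z` determined by an action on `Z`
and a coaction on `U`. -/
noncomputable def braidC (Z U : Type*) [AddCommGroup Z] [Module K Z]
    [AddCommGroup U] [Module K U]
    (σ : A ⊗[K] Z →ₗ[K] Z) (ρU : U →ₗ[K] U ⊗[K] A) :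
    Z ⊗[K] U →ₗ[K] U ⊗[K] Z :=
  lTensor U σ
  ∘ₗ (TensorProduct.assoc K U A Z).toLinearMap
  ∘ₗ (TensorProduct.comm K Z (U ⊗[K] A)).toLinearMap
  ∘ₗ lTensor Z ρU

/-- The diagonal action `a ⊗ (x ⊗ y) ↦ a₍₁₎·x ⊗ a₍₂₎·y` on a tensor product. -/
noncomputable def diagAct (X Y : Type*) [AddCommGroup X] [Module K X]
    [AddCommGroup Y] [Module K Y]
    (σX : A ⊗[K] X →ₗ[K] X) (σY : A ⊗[K] Y →ₗ[K] Y) :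
    A ⊗[K] (X ⊗[K] Y) →ₗ[K] X ⊗[K] Y :=
  TensorProduct.map σX σY
  ∘ₗ (tensorTensorTensorComm K A A X Y).toLinearMap
  ∘ₗ rTensor (X ⊗[K] Y) (Coalgebra.comul (R := K))

/-- The coaction `v ⊗ w ↦ v₍₀₎ ⊗ w₍₀₎ ⊗ w₍₁₎v₍₁₎` on a tensor product. -/
noncomputable def tensorCoact (V W : Type*) [AddCommGroup V] [Module K V]
    [AddCommGroup W] [Module K W]
    (ρV : V →ₗ[K] V ⊗[K] A) (ρW : W →ₗ[K] W ⊗[K] A) :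
    V ⊗[K] W →ₗ[K] (V ⊗[K] W) ⊗[K] A :=
  lTensor (V ⊗[K] W) (mul' K A ∘ₗ (TensorProduct.comm K A A).toLinearMap)
  ∘ₗ (tensorTensorTensorComm K V A W A).toLinearMap
  ∘ₗ TensorProduct.map ρV ρW

end

section

variable (K A : Type*) [Field K] [Ring A] [HopfAlgebra K A]

/-- An algebra automorphism of `A` is a Hopf algebra automorphism when it commutes
with the comultiplication. -/
def IsHopfAuto (α : A ≃ₐ[K] A) : Prop :=
  (Coalgebra.comul (R := K)) ∘ₗ α.toLinearMap
    = TensorProduct.map α.toLinearMap α.toLinearMap ∘ₗ Coalgebra.comul (R := K)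

/-- The action twisted by an endomorphism `θ` of `A`: `a ⇀ w = θ(a)·w`. -/
noncomputable def twistAct (W : Type*) [AddCommGroup W] [Module K W]
    (σW : A ⊗[K] W →ₗ[K] W) (θ : A →ₗ[K] A) : A ⊗[K] W →ₗ[K] W :=
  σW ∘ₗ rTensor W θ

/-- The coaction twisted by an endomorphism `η` of `A`: `w ↦ w₍₀₎ ⊗ η(w₍₁₎)`. -/
noncomputable def twistCoact (W : Type*) [AddCommGroup W] [Module K W]
    (ρW : W →ₗ[K] W ⊗[K] A) (η : A →ₗ[K] A) : W →ₗ[K] W ⊗[K] A :=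
  lTensor W η ∘ₗ ρW

variable {K A}

namespace IsHopfAuto

theorem trans {f g : A ≃ₐ[K] A} (hf : IsHopfAuto K A f) (hg : IsHopfAuto K A g) :
    IsHopfAuto K A (f.trans g) := by
  unfold IsHopfAuto at *
  have h : (f.trans g).toLinearMap = g.toLinearMap ∘ₗ f.toLinearMap := rfl
  rw [h, ← LinearMap.comp_assoc, hg, LinearMap.comp_assoc, hf, ← LinearMap.comp_assoc,
    ← TensorProduct.map_comp]

theorem symm {f : A ≃ₐ[K] A} (hf : IsHopfAuto K A f) : IsHopfAuto K A f.symm := by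
  unfold IsHopfAuto at *
  have h₁ : f.toLinearMap ∘ₗ f.symm.toLinearMap = LinearMap.id := by ext; simp
  have h₂ : f.symm.toLinearMap ∘ₗ f.toLinearMap = LinearMap.id := by ext; simp
  calc Coalgebra.comul ∘ₗ f.symm.toLinearMap
      = TensorProduct.map (f.symm.toLinearMap ∘ₗ f.toLinearMap)
          (f.symm.toLinearMap ∘ₗ f.toLinearMap) ∘ₗ Coalgebra.comul ∘ₗ f.symm.toLinearMap := by
        rw [h₂, TensorProduct.map_id, LinearMap.id_comp]
    _ = TensorProduct.map f.symm.toLinearMap f.symm.toLinearMap ∘ₗ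
          (TensorProduct.map f.toLinearMap f.toLinearMap ∘ₗ Coalgebra.comul) ∘ₗ
          f.symm.toLinearMap := by
        rw [TensorProduct.map_comp]; rfl
    _ = TensorProduct.map f.symm.toLinearMap f.symm.toLinearMap ∘ₗ
          Coalgebra.comul ∘ₗ (f.toLinearMap ∘ₗ f.symm.toLinearMap) := by
        rw [← hf]; rfl
    _ = _ := by rw [h₁, LinearMap.comp_id]

/-- A comultiplicative bijection preserves the counit, by uniqueness of the counit:
`ε ∘ f` is again a left counit for `Δ`, since `ε(f a₍₁₎) f(a₍₂₎) = f(a)`. -/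
theorem counit_comp {f : A ≃ₐ[K] A} (hf : IsHopfAuto K A f) :
    Coalgebra.counit (R := K) ∘ₗ f.toLinearMap = Coalgebra.counit := by
  ext a
  have h := congr($hf a)
  have h₁ := congr((TensorProduct.lid K A).toLinearMap
    (rTensor A (Coalgebra.counit (R := K)) $h))
  rw [LinearMap.comp_apply, Coalgebra.rTensor_counit_comul] at h₁
  simp only [LinearMap.comp_apply] at h₁
  rw [← (Coalgebra.Repr.arbitrary K a).eq] at h₁
  simp only [map_sum, TensorProduct.map_tmul, rTensor_tmul, LinearEquiv.coe_coe,
    TensorProduct.lid_tmul, one_smul, AlgEquiv.toLinearMap_apply] at h₁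
  simp only [← map_smul, ← map_sum] at h₁
  -- `h₂ : ε(a) = ε(f a₍₁₎) ε(a₍₂₎)`, and `h₄` evaluates the right-hand side to `ε(f a)`
  have h₂ := congr(Coalgebra.counit (R := K) $(f.injective h₁))
  have h₃ := congr(TensorProduct.rid K A $(Coalgebra.lTensor_counit_comul (R := K) a))
  rw [← (Coalgebra.Repr.arbitrary K a).eq] at h₃
  simp only [map_sum, lTensor_tmul, TensorProduct.rid_tmul, one_smul] at h₃
  have h₄ := congr(Coalgebra.counit (R := K) (f $h₃))
  simp only [map_sum, map_smul, smul_eq_mul] at h₂ h₄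
  simp only [LinearMap.comp_apply, AlgEquiv.toLinearMap_apply]
  rw [h₂, ← h₄]
  exact Finset.sum_congr rfl fun i _ => mul_comm _ _

/-- Hopf automorphisms commute with the antipode: `S ∘ f` and `f ∘ S` are a left and a right
convolution inverse of `f`. -/
theorem antipode_comp {f : A ≃ₐ[K] A} (hf : IsHopfAuto K A f) :
    antipodeL K A ∘ₗ f.toLinearMap = f.toLinearMap ∘ₗ antipodeL K A := by
  apply WithConv.toConv_injective
  apply left_inv_eq_right_inv (a := WithConv.toConv f.toLinearMap)
  · apply WithConv.ext
    have h := congr(($(LinearMap.antipode_mul_id (R := K) (C := A))).ofConv ∘ₗ f.toLinearMap)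
    simp only [LinearMap.convMul_def, LinearMap.convOne_def, WithConv.ofConv_toConv] at h ⊢
    rw [LinearMap.comp_assoc, LinearMap.comp_assoc, LinearMap.comp_assoc, hf, hf.counit_comp,
      ← LinearMap.comp_assoc Coalgebra.comul, ← TensorProduct.map_comp,
      LinearMap.id_comp] at h
    exact h
  · apply WithConv.ext
    have h := congr(f.toLinearMap ∘ₗ ($(LinearMap.id_mul_antipode (R := K) (C := A))).ofConv)
    simp only [LinearMap.convMul_def, LinearMap.convOne_def, WithConv.ofConv_toConv] at h ⊢
    have hm : f.toLinearMap ∘ₗ mul' K A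
        = mul' K A ∘ₗ TensorProduct.map f.toLinearMap f.toLinearMap := by ext; simp
    have hu : f.toLinearMap ∘ₗ Algebra.linearMap K A = Algebra.linearMap K A := by ext; simp
    rw [← LinearMap.comp_assoc, hm, ← LinearMap.comp_assoc Coalgebra.counit, hu,
      LinearMap.comp_assoc, ← LinearMap.comp_assoc Coalgebra.comul, ← TensorProduct.map_comp,
      LinearMap.comp_id] at h
    exact h

theorem antipodeInv_comp {f : A ≃ₐ[K] A} (hf : IsHopfAuto K A f) {Si : A →ₗ[K] A}
    (hSi₁ : Si ∘ₗ antipodeL K A = LinearMap.id)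
    (hSi₂ : antipodeL K A ∘ₗ Si = LinearMap.id) :
    Si ∘ₗ f.toLinearMap = f.toLinearMap ∘ₗ Si := by
  calc Si ∘ₗ f.toLinearMap
      = Si ∘ₗ (f.toLinearMap ∘ₗ antipodeL K A) ∘ₗ Si := by
        rw [LinearMap.comp_assoc, hSi₂, LinearMap.comp_id]
    _ = (Si ∘ₗ antipodeL K A) ∘ₗ f.toLinearMap ∘ₗ Si := by rw [← hf.antipode_comp]; rfl
    _ = _ := by rw [hSi₁, LinearMap.id_comp]

end IsHopfAuto

theorem isCoassoc_twistCoact {W : Type*} [AddCommGroup W] [Module K W]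
    {η : A ≃ₐ[K] A} (hη : IsHopfAuto K A η)
    {ρ : W →ₗ[K] W ⊗[K] A} (hρ : IsCoassoc ρ) :
    IsCoassoc (twistCoact K A W ρ η.toLinearMap) := by
  unfold IsCoassoc twistCoact at *
  have h₁ : rTensor A (lTensor W η.toLinearMap ∘ₗ ρ) ∘ₗ lTensor W η.toLinearMap
      = TensorProduct.map (lTensor W η.toLinearMap) η.toLinearMap ∘ₗ rTensor A ρ := by
    ext; simp
  have h₂ : TensorProduct.map (lTensor W η.toLinearMap) η.toLinearMap ∘ₗ
        (TensorProduct.assoc K W A A).symm.toLinearMap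
      = (TensorProduct.assoc K W A A).symm.toLinearMap ∘ₗ
        lTensor W (TensorProduct.map η.toLinearMap η.toLinearMap) := by
    ext; simp
  rw [← LinearMap.comp_assoc, h₁, LinearMap.comp_assoc, hρ, ← LinearMap.comp_assoc, h₂,
    LinearMap.comp_assoc, ← LinearMap.comp_assoc ρ, ← lTensor_comp, ← hη, lTensor_comp,
    LinearMap.comp_assoc]

theorem isCounital_twistCoact {W : Type*} [AddCommGroup W] [Module K W]
    {η : A ≃ₐ[K] A} (hη : IsHopfAuto K A η)
    {ρ : W →ₗ[K] W ⊗[K] A} (hρ : IsCounital ρ) :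
    IsCounital (twistCoact K A W ρ η.toLinearMap) := by
  unfold IsCounital twistCoact at *
  rw [← LinearMap.comp_assoc, ← lTensor_comp, hη.counit_comp, hρ]

/-- Naturality of the Yetter–Drinfel'd right-hand side: twisting the action by `θ` and the
coaction by `η` while replacing `φ`, `ψ` by `ηφθ`, `ηψθ` amounts to precomposing the map with
`θ` on `A` and postcomposing it with `η`. -/
theorem ydRHS_twist {W : Type*} [AddCommGroup W] [Module K W]
    {θ η : A ≃ₐ[K] A} (hθ : IsHopfAuto K A θ)
    (act : A ⊗[K] W →ₗ[K] W) (ρ : W →ₗ[K] W ⊗[K] A) (φ ψ : A →ₗ[K] A) :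
    ydRHS K A W (twistAct K A W act θ.toLinearMap) (twistCoact K A W ρ η.toLinearMap)
        (η.toLinearMap ∘ₗ φ ∘ₗ θ.toLinearMap) (η.toLinearMap ∘ₗ ψ ∘ₗ θ.toLinearMap)
      = lTensor W η.toLinearMap ∘ₗ ydRHS K A W act ρ φ ψ ∘ₗ rTensor W θ.toLinearMap := by
  have hθ' (a : A) : Coalgebra.comul (R := K) (θ a)
      = TensorProduct.map θ.toLinearMap θ.toLinearMap (Coalgebra.comul a) := congr($hθ a)
  ext a w
  simp only [ydRHS, AlgebraTensorModule.curry_apply, TensorProduct.curry_apply,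
    LinearMap.coe_restrictScalars, LinearMap.comp_apply, rTensor_tmul,
    AlgEquiv.toLinearMap_apply, hθ', LinearEquiv.coe_coe]
  induction Coalgebra.comul (R := K) a with
  | zero => simp
  | add x y hx hy => simp only [map_add, add_tmul, hx, hy]
  | tmul x y =>
    simp only [TensorProduct.map_tmul, TensorProduct.comm_tmul, rTensor_tmul,
      AlgEquiv.toLinearMap_apply, hθ']
    induction Coalgebra.comul (R := K) y with
    | zero => simp
    | add x y hx hy => simp only [map_add, add_tmul, hx, hy]
    | tmul y z =>
      simp only [TensorProduct.map_tmul, TensorProduct.assoc_tmul, lTensor_tmul, rTensor_tmul,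
        TensorProduct.comm_tmul, twistCoact, LinearMap.comp_apply, AlgEquiv.toLinearMap_apply,
        LinearEquiv.coe_coe]
      induction ρ w with
      | zero => simp
      | add x y hx hy => simp only [map_add, add_tmul, tmul_add, hx, hy]
      | tmul u v => simp [twistAct]

variable (K A)

theorem crossed_functor_yetterDrinfeld
    (α β γ δ : A ≃ₐ[K] A)
    (hα : IsHopfAuto K A α) (hβ : IsHopfAuto K A β)
    (hγ : IsHopfAuto K A γ) (hδ : IsHopfAuto K A δ)
    (W : Type*) [AddCommGroup W] [Module K W] [Module A W] [IsScalarTower K A W]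
    (ρW : W →ₗ[K] W ⊗[K] A)
    (hcoassocW : IsCoassoc (K := K) (A := A) ρW)
    (hcounitW : IsCounital (K := K) (A := A) ρW)
    (Si : A →ₗ[K] A)
    (hSi₁ : Si ∘ₗ antipodeL K A = LinearMap.id)
    (hSi₂ : antipodeL K A ∘ₗ Si = LinearMap.id)
    -- `W` is a `(γ,δ)`-Yetter-Drinfel'd module:
    (hYDW : ρW ∘ₗ actMap K A W
      = ydRHS K A W (actMap K A W) ρW (γ.toLinearMap ∘ₗ Si) δ.toLinearMap) :
    -- the new action `a ⇀ w = (γ⁻¹βγα⁻¹)(a)·w` is a module action: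
    (∀ (a b : A) (w : W),
        twistAct K A W (actMap K A W)
            (γ.symm.toLinearMap ∘ₗ β.toLinearMap ∘ₗ γ.toLinearMap ∘ₗ α.symm.toLinearMap)
            ((a * b) ⊗ₜ[K] w)
          = twistAct K A W (actMap K A W)
              (γ.symm.toLinearMap ∘ₗ β.toLinearMap ∘ₗ γ.toLinearMap ∘ₗ α.symm.toLinearMap)
              (a ⊗ₜ[K] twistAct K A W (actMap K A W)
                (γ.symm.toLinearMap ∘ₗ β.toLinearMap ∘ₗ γ.toLinearMap ∘ₗ α.symm.toLinearMap)
                (b ⊗ₜ[K] w))) ∧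
    (∀ w : W,
        twistAct K A W (actMap K A W)
          (γ.symm.toLinearMap ∘ₗ β.toLinearMap ∘ₗ γ.toLinearMap ∘ₗ α.symm.toLinearMap)
          ((1 : A) ⊗ₜ[K] w) = w) ∧
    -- the new coaction `w ↦ w₍₀₎ ⊗ (αβ⁻¹)(w₍₁₎)` is coassociative and counital:
    IsCoassoc (K := K) (A := A)
      (twistCoact K A W ρW (α.toLinearMap ∘ₗ β.symm.toLinearMap)) ∧
    IsCounital (K := K) (A := A)
      (twistCoact K A W ρW (α.toLinearMap ∘ₗ β.symm.toLinearMap)) ∧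
    -- and together they satisfy the `(αγα⁻¹, αβ⁻¹δγ⁻¹βγα⁻¹)`-Yetter-Drinfel'd
    -- compatibility condition:
    (twistCoact K A W ρW (α.toLinearMap ∘ₗ β.symm.toLinearMap)
        ∘ₗ twistAct K A W (actMap K A W)
            (γ.symm.toLinearMap ∘ₗ β.toLinearMap ∘ₗ γ.toLinearMap ∘ₗ α.symm.toLinearMap)
      = ydRHS K A W
          (twistAct K A W (actMap K A W)
            (γ.symm.toLinearMap ∘ₗ β.toLinearMap ∘ₗ γ.toLinearMap ∘ₗ α.symm.toLinearMap))
          (twistCoact K A W ρW (α.toLinearMap ∘ₗ β.symm.toLinearMap))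
          ((α.toLinearMap ∘ₗ γ.toLinearMap ∘ₗ α.symm.toLinearMap) ∘ₗ Si)
          (α.toLinearMap ∘ₗ β.symm.toLinearMap ∘ₗ δ.toLinearMap ∘ₗ γ.symm.toLinearMap
            ∘ₗ β.toLinearMap ∘ₗ γ.toLinearMap ∘ₗ α.symm.toLinearMap)) := by
  have hθ : IsHopfAuto K A (((α.symm.trans γ).trans β).trans γ.symm) :=
    ((hα.symm.trans hγ).trans hβ).trans hγ.symm
  have hη : IsHopfAuto K A (β.symm.trans α) := hβ.symm.trans hα
  refine ⟨fun a b w => ?_, fun w => ?_, isCoassoc_twistCoact hη hcoassocW,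
    isCounital_twistCoact hη hcounitW, ?_⟩
  · simp [twistAct, actMap, mul_smul]
  · simp [twistAct, actMap]
  · have key := ydRHS_twist (η := β.symm.trans α) hθ (actMap K A W) ρW
      (γ.toLinearMap ∘ₗ Si) δ.toLinearMap
    -- `η γ S⁻¹ θ = (αβ⁻¹) γ (γ⁻¹βγα⁻¹) S⁻¹ = αγα⁻¹ S⁻¹`
    have hφ : (β.symm.trans α).toLinearMap ∘ₗ (γ.toLinearMap ∘ₗ Si) ∘ₗ
          (((α.symm.trans γ).trans β).trans γ.symm).toLinearMap
        = (α.toLinearMap ∘ₗ γ.toLinearMap ∘ₗ α.symm.toLinearMap) ∘ₗ Si := by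
      rw [LinearMap.comp_assoc, hθ.antipodeInv_comp hSi₁ hSi₂]
      ext a
      simp
    rw [hφ, ← LinearMap.comp_assoc (rTensor W _), ← hYDW] at key
    exact key.symm

end
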